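/- arXiv:1802.05632 — 4 statements merged into one kernel-verified Lean document; each statement's English description precedes it below -/
import Mathlib

section
/- Let H be a separable complex Hilbert space and K an index set, and for each n ≥ 0 let (e^n_k)_{k∈K} be an orthonormal basis of H such that e^n_k → e^0_k in norm for each k ∈ K. Let U_n be the unitary operator on H determined by U_n e^0_k = e^n_k for all k ∈ K. Then the sequence (U_n) converges strongly to the identity operator, and the sequence of adjoints (U_n†) also converges strongly to the identity operator. -/
open Filter Topology ContinuousLinearMap

/-!
The `U n` are isometries, hence equicontinuous, so the vectors `x` with `U n x → x` form a closed
subspace; it contains the total family `e 0`, so it is all of `H`. For the adjoints,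
`‖U n† x - x‖ = ‖x - U n x‖` because `U n` is an isometry with inverse `U n†`.
-/

theorem tendsto_apply_of_equicontinuous_of_dense_span {R S E F 𝓕 ι : Type*} [Semiring R]
    [Semiring S] {σ : R →+* S} [TopologicalSpace E] [AddCommMonoid E] [Module R E]
    [UniformSpace F] [AddCommMonoid F] [ContinuousAdd F] [Module S F] [ContinuousConstSMul S F]
    [FunLike 𝓕 E F] [SemilinearMapClass 𝓕 σ E F] {l : Filter ι} {T : ι → 𝓕} {T₀ : E →SL[σ] F}
    {s : Set E} (hT : Equicontinuous fun i => ⇑(T i)) (hs : Dense (Submodule.span R s : Set E))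
    (hconv : ∀ x ∈ s, Tendsto (fun i => T i x) l (𝓝 (T₀ x))) (x : E) :
    Tendsto (fun i => T i x) l (𝓝 (T₀ x)) := by
  have hspan : ∀ y ∈ Submodule.span R s, Tendsto (fun i => T i y) l (𝓝 (T₀ y)) := by
    intro y hy
    induction hy using Submodule.span_induction with
    | mem y hy => exact hconv y hy
    | zero => simpa only [map_zero] using tendsto_const_nhds
    | add y z _ _ hy hz => simpa only [map_add] using hy.add hz
    | smul c y _ hy => simpa only [map_smulₛₗ] using hy.const_smul (σ c)
  exact (hT x).tendsto_of_mem_closure T₀.continuous.continuousWithinAt hspan (hs x)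

theorem tendsto_isometryEquiv_symm_apply_self_iff {X ι : Type*} [PseudoEMetricSpace X]
    {l : Filter ι} {Φ : ι → X ≃ᵢ X} {x : X} :
    Tendsto (fun i => (Φ i).symm x) l (𝓝 x) ↔ Tendsto (fun i => Φ i x) l (𝓝 x) := by
  have hedist (i : ι) : edist ((Φ i).symm x) x = edist (Φ i x) x := by
    rw [← (Φ i).edist_eq, (Φ i).apply_symm_apply, edist_comm]
  simp only [tendsto_iff_edist_tendsto_0, hedist]

theorem unitaries_from_converging_bases_tendsto_id_general {R E K ι : Type*} [Semiring R]
    [SeminormedAddCommGroup E] [Module R E] [ContinuousConstSMul R E] {l : Filter ι} {v : K → E}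
    (hv : Dense (Submodule.span R (Set.range v) : Set E)) {U : ι → E ≃ₗᵢ[R] E}
    (hconv : ∀ k, Tendsto (fun i => U i (v k)) l (𝓝 (v k))) :
    (∀ x, Tendsto (fun i => U i x) l (𝓝 x)) ∧ ∀ x, Tendsto (fun i => (U i).symm x) l (𝓝 x) := by
  have hequi : Equicontinuous fun i => ⇑(U i) :=
    (LipschitzWith.uniformEquicontinuous _ 1 fun i => (U i).lipschitz).equicontinuous
  have hlim (x : E) : Tendsto (fun i => U i x) l (𝓝 x) :=
    tendsto_apply_of_equicontinuous_of_dense_span (T₀ := .id R E) hequi hv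
      (Set.forall_mem_range.mpr hconv) x
  have hlim_symm (x : E) : Tendsto (fun i => (U i).symm x) l (𝓝 x) :=
    (tendsto_isometryEquiv_symm_apply_self_iff (Φ := fun i => (U i).toIsometryEquiv)).mpr (hlim x)
  exact ⟨hlim, hlim_symm⟩

/-- Let `(e^n_k)_{k∈K}` (`n ≥ 0`) be orthonormal bases of a separable complex
Hilbert space with `e^n_k → e^0_k` in norm for each `k`, and let `U_n` be the unitary operator
determined by `U_n e^0_k = e^n_k`. Then `U_n → id` strongly and `U_n† → id` strongly. -/
theorem unitaries_from_converging_bases_tendsto_id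
    {H : Type*} [NormedAddCommGroup H] [InnerProductSpace ℂ H] [CompleteSpace H]
    [TopologicalSpace.SeparableSpace H]
    {K : Type*} (e : ℕ → K → H)
    (hon : ∀ n, Orthonormal ℂ (e n))
    (htotal : ∀ n, (Submodule.span ℂ (Set.range (e n))).topologicalClosure = ⊤)
    (hconv : ∀ k, Tendsto (fun n => e n k) atTop (𝓝 (e 0 k)))
    (U : ℕ → H →L[ℂ] H)
    (hUunit : ∀ n, (ContinuousLinearMap.adjoint (U n)) ∘L (U n) = 1 ∧
      (U n) ∘L (ContinuousLinearMap.adjoint (U n)) = 1)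
    (hUe : ∀ n k, U n (e 0 k) = e n k) :
    (∀ x : H, Tendsto (fun n => U n x) atTop (𝓝 x)) ∧
    (∀ x : H, Tendsto (fun n => (ContinuousLinearMap.adjoint (U n)) x) atTop (𝓝 x)) :=
  unitaries_from_converging_bases_tendsto_id_general
    (Submodule.dense_iff_topologicalClosure_eq_top.mpr (htotal 0))
    (U := fun n => Unitary.linearIsometryEquiv ⟨U n, hUunit n⟩)
    fun k => (hconv k).congr fun n => (hUe n k).symm
end

section
/- Let H and H' be complex Hilbert spaces, I a countable index set, and let E = ℓ²(I, H') be the Hilbert space of square-summable H'-valued families indexed by I. For each n ≥ 0 let V_n : H → E be an isometric bounded linear operator (‖V_n x‖ = ‖x‖ for all x), and define the component operators A^n_i : H → H' by A^n_i x = (V_n x)(i) for i ∈ I. Then the following are equivalent: (a) (V_n) converges strongly to V_0 and (V_n†) converges strongly to V_0†; (b) for every i ∈ I, (A^n_i) converges strongly to A^0_i and ((A^n_i)†) converges strongly to (A^0_i)† as n → ∞. -/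
open Filter Topology ContinuousLinearMap

/-!
The adjoint of the component `A_i = ev_i ∘ V` is `V†` restricted to the vectors supported at `i`.
These vectors span a dense subspace of `ℓ²`, so for uniformly bounded `V_n` the strong convergence
of all `(A^n_i)†` already forces that of `V_n†`. Strong convergence of `V_n†` gives
`⟪V_n x, W x⟫ → ‖W x‖²`, and since `‖V_n x‖ ≤ ‖W x‖` this upgrades to `V_n x → W x` by expanding
`‖V_n x - W x‖²`.
-/

theorem tendsto_apply_of_tendsto_apply_lp_single
    {𝕜 α ι F : Type*} {E : α → Type*} {p : ENNReal} [Fact (1 ≤ p)] [DecidableEq α] [NormedRing 𝕜]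
    [∀ i, NormedAddCommGroup (E i)] [∀ i, Module 𝕜 (E i)] [∀ i, IsBoundedSMul 𝕜 (E i)]
    [AddCommMonoid F] [UniformSpace F] [ContinuousAdd F] [Module 𝕜 F]
    {l : Filter ι} {T : ι → lp E p →L[𝕜] F} {S : lp E p →L[𝕜] F} (hp : p ≠ ⊤)
    (hT : Equicontinuous fun n => ⇑(T n))
    (h : ∀ i y, Tendsto (fun n => T n (lp.single p i y)) l (𝓝 (S (lp.single p i y))))
    (y : lp E p) :
    Tendsto (fun n => T n y) l (𝓝 (S y)) := by
  have hclosed : IsClosed {y | Tendsto (fun n => T n y) l (𝓝 (S y))} :=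
    hT.isClosed_setOfPred_tendsto S.continuous
  refine hclosed.mem_of_tendsto (lp.hasSum_single hp y) (Eventually.of_forall fun s => ?_)
  simp only [Set.mem_ofPred_eq, map_sum]
  exact tendsto_finsetSum s fun i _ => h i (y i)

section InnerProductSpace

variable {𝕜 ι : Type*} [RCLike 𝕜] {l : Filter ι}

theorem tendsto_of_norm_le_of_tendsto_inner
    {E : Type*} [SeminormedAddCommGroup E] [InnerProductSpace 𝕜 E] {u : ι → E} {v : E}
    (hle : ∀ᶠ n in l, ‖u n‖ ≤ ‖v‖)
    (hinner : Tendsto (fun n => inner 𝕜 (u n) v) l (𝓝 (inner 𝕜 v v))) :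
    Tendsto u l (𝓝 v) := by
  have hbound : ∀ᶠ n in l, ‖u n - v‖ ^ 2 ≤ 2 * (‖v‖ ^ 2 - RCLike.re (inner 𝕜 (u n) v)) := by
    filter_upwards [hle] with n hn
    have hsq : ‖u n‖ ^ 2 ≤ ‖v‖ ^ 2 := by gcongr
    linarith [norm_sub_sq (𝕜 := 𝕜) (u n) v]
  have hre : Tendsto (fun n => RCLike.re (inner 𝕜 (u n) v)) l (𝓝 (‖v‖ ^ 2)) := by
    rw [← inner_self_eq_norm_sq (𝕜 := 𝕜) v]
    exact (RCLike.continuous_re.tendsto _).comp hinner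
  have hlim : Tendsto (fun n => 2 * (‖v‖ ^ 2 - RCLike.re (inner 𝕜 (u n) v))) l (𝓝 0) := by
    have hsub := (hre.const_sub (‖v‖ ^ 2)).const_mul 2
    rwa [sub_self (‖v‖ ^ 2), mul_zero] at hsub
  have hsq : Tendsto (fun n => ‖u n - v‖ ^ 2) l (𝓝 0) :=
    squeeze_zero' (Eventually.of_forall fun n => sq_nonneg _) hbound hlim
  rw [tendsto_iff_norm_sub_tendsto_zero]
  simpa only [Real.sqrt_sq (norm_nonneg _), Real.sqrt_zero] using hsq.sqrt

variable {H K L : Type*}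
  [NormedAddCommGroup H] [InnerProductSpace 𝕜 H] [CompleteSpace H]
  [NormedAddCommGroup K] [InnerProductSpace 𝕜 K] [CompleteSpace K]
  [NormedAddCommGroup L] [InnerProductSpace 𝕜 L] [CompleteSpace L]

/-- Strong* convergence of operators between Hilbert spaces: `V` converges to `W` along `l`
pointwise, and so do the adjoints. It is the mode of convergence of the Stinespring isometries and
of their Kraus operators. The argument order is that of `TendstoUniformly`, the limit
before the filter. -/
def TendstoStrongStar (V : ι → H →L[𝕜] K) (W : H →L[𝕜] K) (l : Filter ι) : Prop :=
  (∀ x, Tendsto (fun n => V n x) l (𝓝 (W x))) ∧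
    ∀ y, Tendsto (fun n => adjoint (V n) y) l (𝓝 (adjoint W y))

theorem TendstoStrongStar.const_comp {V : ι → H →L[𝕜] K} {W : H →L[𝕜] K}
    (h : TendstoStrongStar V W l) (T : K →L[𝕜] L) :
    TendstoStrongStar (fun n => T ∘L V n) (T ∘L W) l := by
  refine ⟨fun x => (T.continuous.tendsto _).comp (h.1 x), fun y => ?_⟩
  simpa only [adjoint_comp, comp_apply] using h.2 (adjoint T y)

theorem TendstoStrongStar.of_adjoint {V : ι → H →L[𝕜] K} {W : H →L[𝕜] K}
    (hle : ∀ x, ∀ᶠ n in l, ‖V n x‖ ≤ ‖W x‖)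
    (hadj : ∀ y, Tendsto (fun n => adjoint (V n) y) l (𝓝 (adjoint W y))) :
    TendstoStrongStar V W l := by
  refine ⟨fun x => tendsto_of_norm_le_of_tendsto_inner (𝕜 := 𝕜) (hle x) ?_, hadj⟩
  have hinner : Tendsto (fun n => inner 𝕜 x (adjoint (V n) (W x))) l
      (𝓝 (inner 𝕜 x (adjoint W (W x)))) := tendsto_const_nhds.inner (hadj (W x))
  simpa only [adjoint_inner_right] using hinner

variable {I : Type*} {G : I → Type*} [∀ i, NormedAddCommGroup (G i)]
  [∀ i, InnerProductSpace 𝕜 (G i)] [∀ i, CompleteSpace (G i)]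

theorem adjoint_lp_evalCLM [DecidableEq I] (i : I) :
    adjoint (lp.evalCLM 𝕜 G 2 i) = lp.singleContinuousLinearMap 𝕜 G 2 i :=
  ((eq_adjoint_iff _ _).mpr fun y f => lp.inner_single_left i y f).symm

theorem tendsto_adjoint_of_tendsto_adjoint_evalCLM_comp
    {V : ι → H →L[𝕜] lp G 2} {W : H →L[𝕜] lp G 2} {C : ℝ} (hC : ∀ n, ‖V n‖ ≤ C)
    (h : ∀ i y, Tendsto (fun n => adjoint (lp.evalCLM 𝕜 G 2 i ∘L V n) y) l
      (𝓝 (adjoint (lp.evalCLM 𝕜 G 2 i ∘L W) y)))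
    (y : lp G 2) :
    Tendsto (fun n => adjoint (V n) y) l (𝓝 (adjoint W y)) := by
  classical
  have hequi : Equicontinuous fun n => ⇑(adjoint (V n)) :=
    ((NormedSpace.equicontinuous_TFAE fun n => adjoint (V n)).out 5 1 :).mp
      ⟨C, fun n => (adjoint.norm_map (V n)).trans_le (hC n)⟩
  refine tendsto_apply_of_tendsto_apply_lp_single ENNReal.ofNat_ne_top hequi (fun i y => ?_) y
  simpa only [adjoint_comp, adjoint_lp_evalCLM, comp_apply,
    lp.singleContinuousLinearMap_apply] using h i y

theorem stinespring_isometries_strong_star_iff_kraus_general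
    {V : ι → H →L[𝕜] lp G 2} {W : H →L[𝕜] lp G 2} (hle : ∀ n x, ‖V n x‖ ≤ ‖W x‖) :
    TendstoStrongStar V W l ↔
      ∀ i, TendstoStrongStar (fun n => lp.evalCLM 𝕜 G 2 i ∘L V n) (lp.evalCLM 𝕜 G 2 i ∘L W) l := by
  have hnorm (n : ι) : ‖V n‖ ≤ ‖W‖ :=
    (V n).opNorm_le_bound (norm_nonneg W) fun x => (hle n x).trans (W.le_opNorm x)
  exact ⟨fun h i => h.const_comp (lp.evalCLM 𝕜 G 2 i), fun h =>
    .of_adjoint (fun x => .of_forall (hle · x))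
      (tendsto_adjoint_of_tendsto_adjoint_evalCLM_comp hnorm fun i => (h i).2)⟩

end InnerProductSpace

/-- Let `E = ℓ²(I, H')` with `I` countable, let `V_n : H → E` (`n ≥ 0`) be
isometric bounded linear operators, and let `A^n_i : H → H'` be the component operators,
`A^n_i x = (V_n x)(i)`. Then `V_n → V_0` and `V_n† → V_0†` strongly if and only if, for every
`i`, `A^n_i → A^0_i` and `(A^n_i)† → (A^0_i)†` strongly. -/
theorem stinespring_isometries_strong_star_iff_kraus
    {H H' : Type*} [NormedAddCommGroup H] [InnerProductSpace ℂ H] [CompleteSpace H]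
    [NormedAddCommGroup H'] [InnerProductSpace ℂ H'] [CompleteSpace H']
    {I : Type*} [Countable I]
    (V : ℕ → H →L[ℂ] lp (fun _ : I => H') 2)
    (hiso : ∀ n, ∀ x : H, ‖V n x‖ = ‖x‖)
    (A : ℕ → I → H →L[ℂ] H')
    (hA : ∀ n, ∀ i, ∀ x : H, A n i x = (V n x) i) :
    ((∀ x : H, Tendsto (fun n => V n x) atTop (𝓝 (V 0 x))) ∧
     (∀ y : lp (fun _ : I => H') 2,
        Tendsto (fun n => (ContinuousLinearMap.adjoint (V n)) y) atTop
          (𝓝 ((ContinuousLinearMap.adjoint (V 0)) y)))) ↔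
    (∀ i : I,
      (∀ x : H, Tendsto (fun n => A n i x) atTop (𝓝 (A 0 i x))) ∧
      (∀ y : H', Tendsto (fun n => (ContinuousLinearMap.adjoint (A n i)) y) atTop
        (𝓝 ((ContinuousLinearMap.adjoint (A 0 i)) y)))) := by
  obtain rfl : A = fun n i => lp.evalCLM ℂ (fun _ => H') 2 i ∘L V n := by ext n i x; exact hA n i x
  exact stinespring_isometries_strong_star_iff_kraus_general fun n x => by rw [hiso, hiso]
end

section
/- Let d be a positive integer, (c_n)_{n≥0} a sequence of vectors in ℝ^d, and (B_n)_{n≥0} a sequence of real symmetric d×d matrices. Then the functions f_n : ℝ^d → ℂ, f_n(z) = exp(i⟨c_n, z⟩ − ½ zᵀB_n z), converge pointwise to f_0 (i.e., f_n(z) → f_0(z) for every z ∈ ℝ^d) if and only if c_n → c_0 in ℝ^d and B_n → B_0 entrywise. -/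
open Filter Topology Matrix

/-!
The modulus of `exp(i⟨c, z⟩ − ½ zᵀ B z)` determines `zᵀ B z`, and dividing by the modulus leaves the
phase `exp(i⟨c, z⟩)`; both operations are continuous, so the two parameters can be treated
separately. The entries of `B` are recovered from its quadratic form by polarization. The phase is
the characteristic function of the Dirac mass at `c`, so Lévy's continuity theorem gives weak
convergence of the Dirac masses, which is convergence of the points.
-/

theorem tendsto_cexp_nhds_cexp_iff {α : Type*} {l : Filter α} {f : α → ℂ} {z : ℂ} :
    Tendsto (fun a => Complex.exp (f a)) l (𝓝 (Complex.exp z)) ↔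
      Tendsto (fun a => (f a).re) l (𝓝 z.re) ∧
        Tendsto (fun a => Complex.exp ((f a).im * Complex.I)) l
          (𝓝 (Complex.exp (z.im * Complex.I))) := by
  have polar_form (w : ℂ) :
      Complex.exp w = Complex.exp w.re * Complex.exp (w.im * Complex.I) := by
    rw [← Complex.exp_add, Complex.re_add_im]
  constructor
  · intro h
    have hre : Tendsto (fun a => (f a).re) l (𝓝 z.re) := by
      rw [← Real.comap_exp_nhds_exp, tendsto_comap_iff]
      simpa only [Complex.norm_exp, Function.comp_def] using h.norm
    refine ⟨hre, ?_⟩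
    have phase (w : ℂ) :
        Complex.exp (w.im * Complex.I) = Complex.exp w / Complex.exp w.re := by
      rw [eq_div_iff (Complex.exp_ne_zero _), mul_comm, ← polar_form]
    simpa only [phase, Pi.div_def] using h.div hre.ofReal.cexp (Complex.exp_ne_zero _)
  · rintro ⟨hre, hphase⟩
    simpa only [← polar_form] using hre.ofReal.cexp.mul hphase

section Phase

variable {α : Type*} {l : Filter α} [l.IsCountablyGenerated]

theorem tendsto_iff_forall_tendsto_cexp_inner_mul_I {E : Type*} [NormedAddCommGroup E]
    [InnerProductSpace ℝ E] [FiniteDimensional ℝ E] {u : α → E} {x : E} :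
    Tendsto u l (𝓝 x) ↔
      ∀ t : E, Tendsto (fun a => Complex.exp (inner ℝ (u a) t * Complex.I)) l
        (𝓝 (Complex.exp (inner ℝ x t * Complex.I))) := by
  borelize E
  refine ⟨fun h t => ((h.inner tendsto_const_nhds).ofReal.mul_const _).cexp, fun h => ?_⟩
  refine tendsto_of_seq_tendsto fun s hs => ?_
  have weak_convergence : Tendsto (fun n => MeasureTheory.diracProba (u (s n))) atTop
      (𝓝 (MeasureTheory.diracProba x)) := by
    rw [MeasureTheory.ProbabilityMeasure.tendsto_iff_tendsto_charFun]
    intro t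
    simpa [MeasureTheory.diracProba, MeasureTheory.charFun_dirac, Function.comp_def]
      using (h t).comp hs
  exact MeasureTheory.isEmbedding_diracProba.tendsto_nhds_iff.mpr weak_convergence

theorem tendsto_iff_forall_tendsto_cexp_dotProduct_mul_I {ι : Type*} [Fintype ι]
    {c : α → ι → ℝ} {v : ι → ℝ} :
    Tendsto c l (𝓝 v) ↔
      ∀ z : ι → ℝ, Tendsto (fun a => Complex.exp ((c a ⬝ᵥ z : ℝ) * Complex.I)) l
        (𝓝 (Complex.exp ((v ⬝ᵥ z : ℝ) * Complex.I))) := by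
  have inner_eq (x z : ι → ℝ) : inner ℝ (WithLp.toLp 2 x) (WithLp.toLp 2 z) = x ⬝ᵥ z := by
    rw [EuclideanSpace.inner_toLp_toLp, star_trivial, dotProduct_comm]
  have toLp_tendsto_iff : Tendsto c l (𝓝 v) ↔
      Tendsto (fun a => WithLp.toLp 2 (c a)) l (𝓝 (WithLp.toLp 2 v)) :=
    (PiLp.homeomorph 2 fun _ : ι => ℝ).symm.isEmbedding.tendsto_nhds_iff
  rw [toLp_tendsto_iff, tendsto_iff_forall_tendsto_cexp_inner_mul_I,
    (WithLp.equiv 2 (ι → ℝ)).forall_congr_left]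
  simp only [WithLp.equiv_symm_apply, inner_eq]

end Phase

section QuadraticForm

variable {ι R : Type*} [Fintype ι] [CommRing R]

theorem two_mul_dotProduct_mulVec_of_isSymm {M : Matrix ι ι R} (hM : M.IsSymm) (x y : ι → R) :
    2 * (x ⬝ᵥ M *ᵥ y) = (x + y) ⬝ᵥ M *ᵥ (x + y) - x ⬝ᵥ M *ᵥ x - y ⬝ᵥ M *ᵥ y := by
  have hswap : y ⬝ᵥ M *ᵥ x = x ⬝ᵥ M *ᵥ y := by
    rw [dotProduct_mulVec, ← mulVec_transpose, hM.eq, dotProduct_comm]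
  simp only [mulVec_add, add_dotProduct, dotProduct_add, hswap]
  ring

theorem tendsto_iff_forall_tendsto_dotProduct_mulVec_of_isSymm [Invertible (2 : R)]
    [TopologicalSpace R] [IsTopologicalRing R] {α : Type*} {l : Filter α}
    {B : α → Matrix ι ι R} {A : Matrix ι ι R} (hB : ∀ a, (B a).IsSymm) (hA : A.IsSymm) :
    Tendsto B l (𝓝 A) ↔
      ∀ z : ι → R, Tendsto (fun a => z ⬝ᵥ B a *ᵥ z) l (𝓝 (z ⬝ᵥ A *ᵥ z)) := by
  classical
  constructor
  · intro h z
    have hcont : Continuous fun M : Matrix ι ι R => z ⬝ᵥ M *ᵥ z := by fun_prop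
    exact (hcont.tendsto A).comp h
  · intro h
    have hbilin (x y : ι → R) : Tendsto (fun a => x ⬝ᵥ B a *ᵥ y) l (𝓝 (x ⬝ᵥ A *ᵥ y)) := by
      have hpolar := (((h (x + y)).sub (h x)).sub (h y)).const_mul (⅟(2 : R))
      simpa only [← two_mul_dotProduct_mulVec_of_isSymm, hB, hA, invOf_mul_cancel_left]
        using hpolar
    refine tendsto_pi_nhds.mpr fun i => tendsto_pi_nhds.mpr fun j => ?_
    simpa using hbilin (Pi.single i 1) (Pi.single j 1)

end QuadraticForm

theorem gaussian_char_functions_pointwise_iff_params_general {ι α : Type*} [Fintype ι]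
    {l : Filter α} [l.IsCountablyGenerated] {c : α → ι → ℝ} {v : ι → ℝ}
    {B : α → Matrix ι ι ℝ} {A : Matrix ι ι ℝ} (hB : ∀ a, (B a).IsSymm) (hA : A.IsSymm) :
    (∀ z : ι → ℝ,
        Tendsto
          (fun a => Complex.exp (Complex.I * (c a ⬝ᵥ z : ℝ)
            - (1 / 2 : ℂ) * ((z ⬝ᵥ (B a *ᵥ z) : ℝ) : ℂ)))
          l
          (𝓝 (Complex.exp (Complex.I * (v ⬝ᵥ z : ℝ)
            - (1 / 2 : ℂ) * ((z ⬝ᵥ (A *ᵥ z) : ℝ) : ℂ))))) ↔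
      Tendsto c l (𝓝 v) ∧ Tendsto B l (𝓝 A) := by
  have hre (x q : ℝ) : (Complex.I * x - (1 / 2 : ℂ) * q).re = -(1 / 2) * q := by simp
  have him (x q : ℝ) : (Complex.I * x - (1 / 2 : ℂ) * q).im = x := by simp
  have hscale {q : α → ℝ} {r : ℝ} :
      Tendsto (fun a => -(1 / 2 : ℝ) * q a) l (𝓝 (-(1 / 2) * r)) ↔ Tendsto q l (𝓝 r) :=
    tendsto_const_smul_iff₀ (by norm_num : -(1 / 2 : ℝ) ≠ 0)
  refine (forall_congr' fun z => tendsto_cexp_nhds_cexp_iff).trans ?_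
  simp only [hre, him, hscale, forall_and]
  rw [tendsto_iff_forall_tendsto_cexp_dotProduct_mul_I,
    tendsto_iff_forall_tendsto_dotProduct_mulVec_of_isSymm hB hA, and_comm]

/-- For vectors `c_n ∈ ℝ^d` and real symmetric `d×d` matrices `B_n`
(`n ≥ 0`), the Gaussian characteristic functions
`f_n(z) = exp(i⟨c_n, z⟩ − ½ zᵀ B_n z)` converge pointwise to `f_0` if and only if
`c_n → c_0` and `B_n → B_0` entrywise. -/
theorem gaussian_char_functions_pointwise_iff_params
    (d : ℕ) (hd : 0 < d)
    (c : ℕ → Fin d → ℝ) (B : ℕ → Matrix (Fin d) (Fin d) ℝ)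
    (hBsymm : ∀ n, (B n).IsSymm) :
    ((∀ z : Fin d → ℝ,
        Tendsto
          (fun n => Complex.exp (Complex.I * ((c n) ⬝ᵥ z : ℝ)
            - (1 / 2 : ℂ) * ((z ⬝ᵥ ((B n) *ᵥ z) : ℝ) : ℂ)))
          atTop
          (𝓝 (Complex.exp (Complex.I * ((c 0) ⬝ᵥ z : ℝ)
            - (1 / 2 : ℂ) * ((z ⬝ᵥ ((B 0) *ᵥ z) : ℝ) : ℂ))))) ↔
      ((∀ i, Tendsto (fun n => c n i) atTop (𝓝 (c 0 i))) ∧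
       (∀ i j, Tendsto (fun n => B n i j) atTop (𝓝 (B 0 i j))))) := by
  rw [gaussian_char_functions_pointwise_iff_params_general hBsymm (hBsymm 0), tendsto_pi_nhds]
  exact and_congr_right fun _ => tendsto_pi_nhds.trans (forall_congr' fun _ => tendsto_pi_nhds)
end

section
/- Let s_A, s_B be positive integers and let Δ be the standard 2s_A × 2s_A symplectic matrix (the block matrix [[0, I_{s_A}], [−I_{s_A}, 0]]). For each n ≥ 0 let K_n be a real 2s_A × 2s_B matrix, ℓ_n ∈ ℝ^{2s_B}, and α_n a real symmetric 2s_B × 2s_B matrix. Suppose that for every m ∈ ℝ^{2s_A}, every real symmetric 2s_A × 2s_A matrix σ such that both complex matrices σ + iΔ and σ − iΔ are positive semidefinite, and every z ∈ ℝ^{2s_B}, one has exp(i⟨mᵀK_n + ℓ_n, z⟩ − ½ zᵀ(α_n + K_nᵀ σ K_n) z) → exp(i⟨mᵀK_0 + ℓ_0, z⟩ − ½ zᵀ(α_0 + K_0ᵀ σ K_0) z) as n → ∞. Then K_n → K_0, ℓ_n → ℓ_0 and α_n → α_0 (entrywise). -/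
open Filter Topology Matrix
open scoped ComplexOrder

/-! A single input covariance `σ` suffices. The modulus of the characteristic function determines
the output quadratic form, and its phase then determines the output mean, because by Lévy's theorem
applied to Dirac masses the characters of `ℝᵏ` detect convergence. The means `0` and `m` isolate `ℓ`
and `m ᵥ* K`; subtracting the quadratic form of `Kᵀ σ K` leaves that of `α`. The vacuum covariance
`σ = 1` is admissible because `iΔ` is a Hermitian involution. -/

section CharacteristicFunctions

variable {β : Type*} {l : Filter β}

theorem tendsto_re_of_tendsto_cexp {w : β → ℂ} {w₀ : ℂ}
    (h : Tendsto (fun n => Complex.exp (w n)) l (𝓝 (Complex.exp w₀))) :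
    Tendsto (fun n => (w n).re) l (𝓝 w₀.re) := by
  simpa only [Complex.norm_exp, Real.log_exp] using h.norm.log (norm_ne_zero_iff.2 w₀.exp_ne_zero)

theorem tendsto_cexp_I_mul_im_of_tendsto_cexp {w : β → ℂ} {w₀ : ℂ}
    (h : Tendsto (fun n => Complex.exp (w n)) l (𝓝 (Complex.exp w₀))) :
    Tendsto (fun n => Complex.exp (Complex.I * (w n).im)) l
      (𝓝 (Complex.exp (Complex.I * w₀.im))) := by
  have phase_eq (v : ℂ) :
      Complex.exp (Complex.I * v.im) = Complex.exp v / Complex.exp v.re := by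
    rw [← Complex.exp_sub]
    congr 1
    linear_combination v.re_add_im
  have hre : Tendsto (fun n => Complex.exp (w n).re) l (𝓝 (Complex.exp w₀.re)) :=
    (tendsto_re_of_tendsto_cexp h).ofReal.cexp
  simpa only [phase_eq, Pi.div_def] using h.div hre (Complex.exp_ne_zero _)

theorem tendsto_of_tendsto_cexp_inner {E : Type*} [NormedAddCommGroup E] [InnerProductSpace ℝ E]
    [FiniteDimensional ℝ E] [l.IsCountablyGenerated] {x : β → E} {x₀ : E}
    (h : ∀ t, Tendsto (fun n => Complex.exp (inner ℝ (x n) t * Complex.I)) l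
      (𝓝 (Complex.exp (inner ℝ x₀ t * Complex.I)))) :
    Tendsto x l (𝓝 x₀) := by
  borelize E
  have charFun_diracProba (y t : E) :
      MeasureTheory.charFun (MeasureTheory.diracProba y : MeasureTheory.Measure E) t =
        Complex.exp (inner ℝ y t * Complex.I) :=
    MeasureTheory.charFun_dirac t
  refine tendsto_of_seq_tendsto fun u hu =>
    MeasureTheory.isEmbedding_diracProba.tendsto_nhds_iff.2
      (MeasureTheory.ProbabilityMeasure.tendsto_iff_tendsto_charFun.2 fun t => ?_)
  simpa only [Function.comp_def, charFun_diracProba] using (h t).comp hu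

variable {κ : Type*} [Fintype κ]

theorem tendsto_of_tendsto_cexp_dotProduct [l.IsCountablyGenerated] {x : β → κ → ℝ} {x₀ : κ → ℝ}
    (h : ∀ z, Tendsto (fun n => Complex.exp (Complex.I * (x n ⬝ᵥ z : ℝ))) l
      (𝓝 (Complex.exp (Complex.I * (x₀ ⬝ᵥ z : ℝ))))) :
    Tendsto x l (𝓝 x₀) := by
  have hx : Tendsto (fun n => WithLp.toLp 2 (x n)) l (𝓝 (WithLp.toLp 2 x₀)) :=
    tendsto_of_tendsto_cexp_inner fun t => by
      simpa [EuclideanSpace.inner_eq_star_dotProduct, dotProduct_comm, mul_comm] using h t.ofLp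
  exact ((PiLp.continuous_ofLp 2 _).tendsto _).comp hx

/-- The characteristic function `z ↦ exp(i⟨μ, z⟩ − ½ zᵀ S z)` of the Gaussian state with mean `μ`
and covariance `S`. It is defined for every real matrix `S`, with no symmetry or positivity
imposed. -/
noncomputable def gaussianCharFun (μ : κ → ℝ) (S : Matrix κ κ ℝ) (z : κ → ℝ) : ℂ :=
  Complex.exp (Complex.I * (μ ⬝ᵥ z : ℝ) - (1 / 2 : ℂ) * ((z ⬝ᵥ (S *ᵥ z) : ℝ) : ℂ))

variable {μ : β → κ → ℝ} {μ₀ : κ → ℝ} {S : β → Matrix κ κ ℝ} {S₀ : Matrix κ κ ℝ}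

theorem tendsto_mean_of_tendsto_gaussianCharFun [l.IsCountablyGenerated]
    (h : ∀ z, Tendsto (fun n => gaussianCharFun (μ n) (S n) z) l (𝓝 (gaussianCharFun μ₀ S₀ z))) :
    Tendsto μ l (𝓝 μ₀) :=
  tendsto_of_tendsto_cexp_dotProduct fun z => by
    simpa using tendsto_cexp_I_mul_im_of_tendsto_cexp (h z)

theorem tendsto_dotProduct_mulVec_of_tendsto_gaussianCharFun {z : κ → ℝ}
    (h : Tendsto (fun n => gaussianCharFun (μ n) (S n) z) l (𝓝 (gaussianCharFun μ₀ S₀ z))) :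
    Tendsto (fun n => z ⬝ᵥ (S n *ᵥ z)) l (𝓝 (z ⬝ᵥ (S₀ *ᵥ z))) := by
  simpa using (tendsto_re_of_tendsto_cexp h).const_mul (-2)

end CharacteristicFunctions

section QuadraticForms

variable {𝕜 κ : Type*} [Field 𝕜] [NeZero (2 : 𝕜)] [Fintype κ]

theorem apply_eq_polarization_of_isSymm [DecidableEq κ] {A : Matrix κ κ 𝕜} (hA : A.IsSymm)
    (i j : κ) :
    A i j = ((Pi.single i 1 + Pi.single j 1) ⬝ᵥ (A *ᵥ (Pi.single i 1 + Pi.single j 1))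
      - Pi.single i 1 ⬝ᵥ (A *ᵥ Pi.single i 1) - Pi.single j 1 ⬝ᵥ (A *ᵥ Pi.single j 1)) / 2 := by
  simp only [mulVec_add, add_dotProduct, dotProduct_add, single_one_dotProduct,
    mulVec_single_one, col_apply, hA.apply i j]
  field_simp
  ring

theorem tendsto_of_tendsto_dotProduct_mulVec [TopologicalSpace 𝕜] [IsTopologicalRing 𝕜]
    {β : Type*} {l : Filter β} {A : β → Matrix κ κ 𝕜} {A₀ : Matrix κ κ 𝕜}
    (hA : ∀ n, (A n).IsSymm) (hA₀ : A₀.IsSymm)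
    (h : ∀ z, Tendsto (fun n => z ⬝ᵥ (A n *ᵥ z)) l (𝓝 (z ⬝ᵥ (A₀ *ᵥ z)))) :
    Tendsto A l (𝓝 A₀) := by
  classical
  refine tendsto_pi_nhds.2 fun i => tendsto_pi_nhds.2 fun j => ?_
  simp only [apply_eq_polarization_of_isSymm hA₀, fun n => apply_eq_polarization_of_isSymm (hA n)]
  exact (((h _).sub (h _)).sub (h _)).div_const 2

end QuadraticForms

section VacuumCovariance

theorem posSemidef_one_add_of_mul_self_eq_one {𝕜 ι : Type*} [RCLike 𝕜] [Fintype ι]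
    [DecidableEq ι] {U : Matrix ι ι 𝕜} (hU : U.IsHermitian) (hsq : U * U = 1) :
    (1 + U).PosSemidef := by
  have hself : (1 + U)ᴴ * (1 + U) = (2 : 𝕜) • (1 + U) := by
    rw [conjTranspose_add, conjTranspose_one, hU.eq, two_smul]
    simp only [add_mul, mul_add, one_mul, mul_one, hsq]
    abel
  have hpos := (posSemidef_conjTranspose_mul_self (1 + U)).smul (one_half_pos (α := 𝕜)).le
  rwa [hself, smul_smul, one_div, inv_mul_cancel₀ two_ne_zero, one_smul] at hpos

variable (ι : Type*) [DecidableEq ι]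

theorem isHermitian_I_smul_J : (Complex.I • J ι ℂ).IsHermitian := by
  simp [IsHermitian, J, fromBlocks_conjTranspose, fromBlocks_smul]

theorem I_smul_J_mul_self [Fintype ι] : (Complex.I • J ι ℂ) * (Complex.I • J ι ℂ) = 1 := by
  rw [smul_mul_smul_comm, Complex.I_mul_I, J_squared, neg_smul, one_smul, neg_neg]

theorem posSemidef_one_add_I_smul_J [Finite ι] : (1 + Complex.I • J ι ℂ).PosSemidef := by
  have := Fintype.ofFinite ι
  exact posSemidef_one_add_of_mul_self_eq_one (isHermitian_I_smul_J ι) (I_smul_J_mul_self ι)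

theorem posSemidef_one_sub_I_smul_J [Finite ι] : (1 - Complex.I • J ι ℂ).PosSemidef := by
  have := Fintype.ofFinite ι
  rw [sub_eq_add_neg]
  exact posSemidef_one_add_of_mul_self_eq_one (isHermitian_I_smul_J ι).neg
    ((neg_mul_neg _ _).trans (I_smul_J_mul_self ι))

end VacuumCovariance

theorem gaussian_channel_params_converge_of_char_functions_general
    {β ι κ : Type*} [Fintype ι] [Fintype κ] {l : Filter β} [l.IsCountablyGenerated]
    {K : β → Matrix ι κ ℝ} {K₀ : Matrix ι κ ℝ} {ℓ : β → κ → ℝ} {ℓ₀ : κ → ℝ}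
    {α : β → Matrix κ κ ℝ} {α₀ : Matrix κ κ ℝ} (hα : ∀ n, (α n).IsSymm) (hα₀ : α₀.IsSymm)
    (σ : Matrix ι ι ℝ)
    (hconv : ∀ m z, Tendsto
      (fun n => gaussianCharFun (m ᵥ* K n + ℓ n) (α n + (K n)ᵀ * σ * K n) z) l
      (𝓝 (gaussianCharFun (m ᵥ* K₀ + ℓ₀) (α₀ + K₀ᵀ * σ * K₀) z))) :
    Tendsto K l (𝓝 K₀) ∧ Tendsto ℓ l (𝓝 ℓ₀) ∧ Tendsto α l (𝓝 α₀) := by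
  classical
  have hmean m : Tendsto (fun n => m ᵥ* K n + ℓ n) l (𝓝 (m ᵥ* K₀ + ℓ₀)) :=
    tendsto_mean_of_tendsto_gaussianCharFun (hconv m)
  have hℓ : Tendsto ℓ l (𝓝 ℓ₀) := by simpa using hmean 0
  have hK : Tendsto K l (𝓝 K₀) := tendsto_pi_nhds.2 fun i => by
    simpa [row_def] using (hmean (Pi.single i 1)).sub hℓ
  refine ⟨hK, hℓ, tendsto_of_tendsto_dotProduct_mulVec hα hα₀ fun z => ?_⟩
  have hout := tendsto_dotProduct_mulVec_of_tendsto_gaussianCharFun (hconv 0 z)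
  have hnoise : Tendsto (fun n => z ⬝ᵥ (((K n)ᵀ * σ * K n) *ᵥ z)) l
      (𝓝 (z ⬝ᵥ ((K₀ᵀ * σ * K₀) *ᵥ z))) :=
    ((by fun_prop : Continuous fun M : Matrix ι κ ℝ => z ⬝ᵥ ((Mᵀ * σ * M) *ᵥ z)).tendsto _).comp hK
  simpa [add_mulVec, dotProduct_add] using hout.sub hnoise

/-- Let `Δ` be the standard symplectic matrix on `ℝ^{2s_A}` and, for each
`n ≥ 0`, let `(K_n, ℓ_n, α_n)` be Gaussian-channel parameters (`K_n` a real `2s_A × 2s_B`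
matrix, `ℓ_n ∈ ℝ^{2s_B}`, `α_n` real symmetric). If for every mean `m ∈ ℝ^{2s_A}`, every real
symmetric covariance matrix `σ` with `σ ± iΔ` positive semidefinite, and every `z ∈ ℝ^{2s_B}`
the Gaussian characteristic functions
`exp(i⟨mᵀK_n + ℓ_n, z⟩ − ½ zᵀ(α_n + K_nᵀ σ K_n) z)` converge to the one with parameters
`(K_0, ℓ_0, α_0)`, then `K_n → K_0`, `ℓ_n → ℓ_0` and `α_n → α_0` entrywise. -/
theorem gaussian_channel_params_converge_of_char_functions
    (sA sB : ℕ) (hsA : 0 < sA) (hsB : 0 < sB)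
    (Δ : Matrix (Fin sA ⊕ Fin sA) (Fin sA ⊕ Fin sA) ℝ)
    (hΔ : Δ = Matrix.fromBlocks 0 1 (-1) 0)
    (K : ℕ → Matrix (Fin sA ⊕ Fin sA) (Fin (2 * sB)) ℝ)
    (ℓ : ℕ → Fin (2 * sB) → ℝ)
    (α : ℕ → Matrix (Fin (2 * sB)) (Fin (2 * sB)) ℝ)
    (hαsymm : ∀ n, (α n).IsSymm)
    (hconv : ∀ (m : Fin sA ⊕ Fin sA → ℝ)
      (σ : Matrix (Fin sA ⊕ Fin sA) (Fin sA ⊕ Fin sA) ℝ), σ.IsSymm →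
      (Matrix.PosSemidef (σ.map Complex.ofReal + Complex.I • Δ.map Complex.ofReal)) →
      (Matrix.PosSemidef (σ.map Complex.ofReal - Complex.I • Δ.map Complex.ofReal)) →
      ∀ z : Fin (2 * sB) → ℝ,
        Tendsto
          (fun n => Complex.exp (Complex.I * (((m ᵥ* K n) + ℓ n) ⬝ᵥ z : ℝ)
            - (1 / 2 : ℂ) * ((z ⬝ᵥ ((α n + (K n)ᵀ * σ * K n) *ᵥ z) : ℝ) : ℂ)))
          atTop
          (𝓝 (Complex.exp (Complex.I * (((m ᵥ* K 0) + ℓ 0) ⬝ᵥ z : ℝ)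
            - (1 / 2 : ℂ) * ((z ⬝ᵥ ((α 0 + (K 0)ᵀ * σ * K 0) *ᵥ z) : ℝ) : ℂ))))) :
    (∀ i j, Tendsto (fun n => K n i j) atTop (𝓝 (K 0 i j))) ∧
    (∀ i, Tendsto (fun n => ℓ n i) atTop (𝓝 (ℓ 0 i))) ∧
    (∀ i j, Tendsto (fun n => α n i j) atTop (𝓝 (α 0 i j))) := by
  have hΔJ : Δ.map Complex.ofReal = -J (Fin sA) ℂ := by
    simp [hΔ, J, fromBlocks_map, fromBlocks_neg, Matrix.map_neg]
  obtain ⟨hK, hℓ, hα⟩ := gaussian_channel_params_converge_of_char_functions_general hαsymm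
    (hαsymm 0) 1 fun m => hconv m 1 isSymm_one
      (by simpa [hΔJ, ← sub_eq_add_neg] using posSemidef_one_sub_I_smul_J _)
      (by simpa [hΔJ] using posSemidef_one_add_I_smul_J _)
  exact ⟨fun i j => (hK.apply_nhds i).apply_nhds j, hℓ.apply_nhds,
    fun i j => (hα.apply_nhds i).apply_nhds j⟩
end
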